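/- For every integer k ≥ 2, the sequence r ↦ R_r(k)^{1/r} converges in the extended nonnegative reals [0, +∞] as r → ∞, and its limit equals sup_{r ≥ 1} (R_r(k) − 1)^{1/r}. -/

import Mathlib

open Filter Topology
open scoped ENNReal

/-- `N` has the Ramsey property for the tuple `k`: every `r`-coloring of the
edges of the complete graph on `N` vertices admits a color `i` and a set of
`k i` vertices all of whose connecting edges have color `i`. -/
def ramseyProp {r : ℕ} (k : Fin r → ℕ) (N : ℕ) : Prop :=
  ∀ c : Sym2 (Fin N) → Fin r, ∃ i : Fin r, ∃ S : Finset (Fin N),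
    S.card = k i ∧ ∀ u ∈ S, ∀ v ∈ S, u ≠ v → c s(u, v) = i

/-- The multicolor Ramsey number `R(k 0, …, k (r-1))`: the least positive `N`
with the Ramsey property. -/
noncomputable def multiRamsey {r : ℕ} (k : Fin r → ℕ) : ℕ :=
  sInf {N | 0 < N ∧ ramseyProp k N}

/-- The diagonal multicolor Ramsey number `R_r(k)`. -/
noncomputable def diagRamsey (r k : ℕ) : ℕ :=
  multiRamsey (fun _ : Fin r => k)

/-- DC, the "decreasing conjecture". -/
def DC : Prop :=
  ∀ (r : ℕ), 2 ≤ r → ∀ k : Fin r → ℕ, (∀ l, 2 ≤ k l) →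
    ∀ i j : Fin r, i ≠ j → 3 ≤ k i → k i ≤ k j →
      multiRamsey (fun l => if l = i then k i - 1 else if l = j then k j + 1 else k l)
        ≤ multiRamsey k

/-!
Color the lexicographic product of two edge-colored complete graphs with disjoint palettes: pairs
of vertices in distinct fibers inherit the first coloring, pairs inside a fiber the second. A
monochromatic clique then either projects injectively to the first factor or lies in one fiber, so
extremal colorings multiply and `r ↦ R_r(k) - 1` is supermultiplicative. Fekete's lemma, applied to
logarithms and without a boundedness assumption, shows that `(R_r(k) - 1) ^ (1 / r)` converges to
its supremum in `[0, ∞]`. Since `R_r(k) - 1 ≤ R_r(k) ≤ 2 (R_r(k) - 1)` and `2 ^ (1 / r) → 1`, the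
sequence `R_r(k) ^ (1 / r)` has the same limit.
-/

section Colorings

variable {V W ι κ : Type*} {r : ℕ}

/-- Under the edge coloring `c`, the vertex set `S` spans a clique of color `i`. As in `ramseyProp`,
colorings are also defined on the loops of `Sym2 V`, whose colors are ignored. -/
def IsMonochromatic (c : Sym2 V → ι) (i : ι) (S : Finset V) : Prop :=
  (S : Set V).Pairwise fun u v => c s(u, v) = i

/-- The edge coloring `c` has no clique of color `i` on exactly `k i` vertices, for any `i`. Such
colorings are the witnesses for lower bounds on Ramsey numbers. -/
def AvoidsCliques (c : Sym2 V → ι) (k : ι → ℕ) : Prop :=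
  ∀ i S, IsMonochromatic c i S → S.card ≠ k i

theorem IsMonochromatic.insert [DecidableEq V] {c : Sym2 V → ι} {i : ι} {S : Finset V} {x : V}
    (h : IsMonochromatic c i S) (hx : ∀ y ∈ S, c s(x, y) = i) :
    IsMonochromatic c i (insert x S) := by
  rw [IsMonochromatic, Finset.coe_insert]
  exact Set.Pairwise.insert h fun y hy _ => ⟨hx y hy, Sym2.eq_swap.symm ▸ hx y hy⟩

theorem IsMonochromatic.image [DecidableEq W] {c : Sym2 W → ι} {i : ι} {S : Finset V} {f : V → W}
    (hf : Set.InjOn f S) (h : IsMonochromatic (c ∘ Sym2.map f) i S) :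
    IsMonochromatic c i (S.image f) := by
  rw [IsMonochromatic, Finset.coe_image, hf.pairwise_image]
  exact h

namespace AvoidsCliques

theorem ne_zero {c : Sym2 V → ι} {k : ι → ℕ} (h : AvoidsCliques c k) (i : ι) : k i ≠ 0 :=
  (h i ∅ (by simp [IsMonochromatic])).symm

theorem of_card_lt [Fintype V] (c : Sym2 V → ι) {k : ι → ℕ} (hk : ∀ i, Fintype.card V < k i) :
    AvoidsCliques c k :=
  fun i S _ => (S.card_le_univ.trans_lt (hk i)).ne

theorem comp_map {c : Sym2 V → ι} {k : ι → ℕ} (h : AvoidsCliques c k) (f : W ↪ V) :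
    AvoidsCliques (c ∘ Sym2.map f) k := by
  classical
  intro i S hS
  rw [← Finset.card_image_of_injective S f.injective]
  exact h i _ (hS.image f.injective.injOn)

theorem equiv_comp {c : Sym2 V → ι} {k : κ → ℕ} (e : ι ≃ κ) (h : AvoidsCliques c (k ∘ e)) :
    AvoidsCliques (e ∘ c) k := by
  intro i S hS
  rw [← e.apply_symm_apply i]
  exact h (e.symm i) S fun u hu v hv huv => e.eq_symm_apply.mpr (hS hu hv huv)

theorem comp_map_link [DecidableEq ι] {c : Sym2 V → ι} {k : ι → ℕ} (h : AvoidsCliques c k) {x : V}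
    {i : ι} (f : W ↪ V) (hfx : ∀ w, f w ≠ x) (hc : ∀ w, c s(x, f w) = i) :
    AvoidsCliques (c ∘ Sym2.map f) (Function.update k i (k i - 1)) := by
  classical
  intro j S hS hcard
  obtain rfl | hj := eq_or_ne j i
  · rw [Function.update_self] at hcard
    have hmono : IsMonochromatic c j (insert x (S.image f)) :=
      (hS.image f.injective.injOn).insert (by simpa using fun w _ => hc w)
    have hx : x ∉ S.image f := by simpa using fun w _ => hfx w
    refine h j _ hmono ?_
    rw [Finset.card_insert_of_notMem hx, Finset.card_image_of_injective S f.injective, hcard,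
      Nat.sub_add_cancel (Nat.pos_of_ne_zero (h.ne_zero j))]
  · exact h.comp_map f j S hS (by rwa [Function.update_of_ne hj] at hcard)

end AvoidsCliques

open Classical in
/-- The lexicographic product of two edge colorings, with disjoint palettes: a pair of vertices with
distinct first coordinates is colored by `c`, a pair with equal first coordinates by `d`. -/
noncomputable def lexColoring (c : Sym2 V → ι) (d : Sym2 W → κ) : Sym2 (V × W) → ι ⊕ κ := fun e =>
  if (e.map Prod.fst).IsDiag then .inr (d (e.map Prod.snd)) else .inl (c (e.map Prod.fst))

theorem lexColoring_mk_eq_inl_iff {c : Sym2 V → ι} {d : Sym2 W → κ} {u v : V × W} {i : ι} :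
    lexColoring c d s(u, v) = .inl i ↔ u.1 ≠ v.1 ∧ c s(u.1, v.1) = i := by
  by_cases huv : u.1 = v.1 <;> simp [lexColoring, huv]

theorem lexColoring_mk_eq_inr_iff {c : Sym2 V → ι} {d : Sym2 W → κ} {u v : V × W} {j : κ} :
    lexColoring c d s(u, v) = .inr j ↔ u.1 = v.1 ∧ d s(u.2, v.2) = j := by
  by_cases huv : u.1 = v.1 <;> simp [lexColoring, huv]

theorem AvoidsCliques.lexColoring {c : Sym2 V → ι} {d : Sym2 W → κ} {k : ι → ℕ} {l : κ → ℕ}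
    (hc : AvoidsCliques c k) (hd : AvoidsCliques d l) :
    AvoidsCliques (lexColoring c d) (Sum.elim k l) := by
  classical
  rintro (i | j) S hS
  · simp only [IsMonochromatic, lexColoring_mk_eq_inl_iff] at hS
    have hinj : Set.InjOn Prod.fst (S : Set (V × W)) := fun u hu v hv huv =>
      by_contra fun hne => (hS hu hv hne).1 huv
    rw [← Finset.card_image_of_injOn hinj]
    exact hc i _ (.image hinj fun u hu v hv huv => (hS hu hv huv).2)
  · simp only [IsMonochromatic, lexColoring_mk_eq_inr_iff] at hS
    have hinj : Set.InjOn Prod.snd (S : Set (V × W)) := fun u hu v hv huv =>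
      by_contra fun hne => hne (Prod.ext (hS hu hv hne).1 huv)
    rw [← Finset.card_image_of_injOn hinj]
    exact hd j _ (.image hinj fun u hu v hv huv => (hS hu hv huv).2)

theorem ramseyProp_iff_forall_not_avoidsCliques {k : Fin r → ℕ} {N : ℕ} :
    ramseyProp k N ↔ ∀ c : Sym2 (Fin N) → Fin r, ¬ AvoidsCliques c k := by
  simp only [ramseyProp, AvoidsCliques, IsMonochromatic, Set.Pairwise, not_forall, not_not,
    Finset.mem_coe, exists_prop, and_comm]

theorem ramseyProp.card_lt_of_avoidsCliques [Fintype V] {k : Fin r → ℕ} {N : ℕ}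
    (hN : ramseyProp k N) {c : Sym2 V → Fin r} (hc : AvoidsCliques c k) : Fintype.card V < N := by
  by_contra! hle
  obtain ⟨f⟩ : Nonempty (Fin N ↪ V) := Function.Embedding.nonempty_of_card_le (by simpa using hle)
  exact ramseyProp_iff_forall_not_avoidsCliques.mp hN _ (hc.comp_map f)

theorem ramseyProp_sum_add_one {k M : Fin r → ℕ}
    (hM : ∀ i, ramseyProp (Function.update k i (k i - 1)) (M i)) :
    ramseyProp k (∑ i, M i + 1) := by
  rw [ramseyProp_iff_forall_not_avoidsCliques]
  intro c hc
  let color : {y : Fin (∑ i, M i + 1) // y ≠ 0} → Fin r := fun y => c s(0, y)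
  have hlink (i : Fin r) : Fintype.card {y // color y = i} < M i :=
    (hM i).card_lt_of_avoidsCliques <|
      hc.comp_map_link ((Function.Embedding.subtype _).trans (Function.Embedding.subtype _))
        (fun y => y.1.2) fun y => y.2
  have hcard : ∑ i, Fintype.card {y // color y = i} = ∑ i, M i := by
    rw [← Fintype.card_sigma, Fintype.card_congr (Equiv.sigmaFiberEquiv color)]
    simp
  have hlt : ∑ i, Fintype.card {y // color y = i} < ∑ i, M i :=
    Finset.sum_lt_sum_of_nonempty ⟨c s(0, 0), Finset.mem_univ _⟩ fun i _ => hlink i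
  exact hlt.ne hcard

theorem exists_ramseyProp (k : Fin r → ℕ) : ∃ N, ramseyProp k N := by
  induction hn : ∑ i, k i using Nat.strong_induction_on generalizing k with
  | _ n ih =>
  by_cases h0 : ∃ i, k i = 0
  · obtain ⟨i, hi⟩ := h0
    exact ⟨0, ramseyProp_iff_forall_not_avoidsCliques.mpr fun c hc => hc.ne_zero i hi⟩
  push Not at h0
  have hlt (i : Fin r) : ∑ j, Function.update k i (k i - 1) j < n := by
    have hki : k i - 1 < k i := Nat.sub_one_lt (h0 i)
    have hle : Function.update k i (k i - 1) ≤ k := update_le_self_iff.mpr hki.le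
    exact hn ▸ Finset.sum_lt_sum (fun j _ => hle j) ⟨i, Finset.mem_univ i, by simpa using hki⟩
  choose M hM using fun i => ih _ (hlt i) _ rfl
  exact ⟨_, ramseyProp_sum_add_one hM⟩

end Colorings

section RamseyNumbers

variable {V : Type*} {r s : ℕ}

theorem multiRamsey_mem (k : Fin r → ℕ) : multiRamsey k ∈ {N | 0 < N ∧ ramseyProp k N} := by
  obtain ⟨N, hN⟩ := exists_ramseyProp k
  refine Nat.sInf_mem ⟨N + 1, N.succ_pos, ?_⟩
  refine ramseyProp_iff_forall_not_avoidsCliques.mpr fun c hc => ?_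
  exact absurd (hN.card_lt_of_avoidsCliques hc) (by simp)

theorem AvoidsCliques.card_lt_multiRamsey [Fintype V] {c : Sym2 V → Fin r} {k : Fin r → ℕ}
    (h : AvoidsCliques c k) : Fintype.card V < multiRamsey k :=
  (multiRamsey_mem k).2.card_lt_of_avoidsCliques h

theorem exists_avoidsCliques_of_lt_multiRamsey {k : Fin r → ℕ} {N : ℕ} (hN : 0 < N)
    (hlt : N < multiRamsey k) : ∃ c : Sym2 (Fin N) → Fin r, AvoidsCliques c k := by
  simpa [ramseyProp_iff_forall_not_avoidsCliques] using
    fun h => Nat.notMem_of_lt_sInf hlt ⟨hN, h⟩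

theorem one_lt_multiRamsey [NeZero r] {k : Fin r → ℕ} (hk : ∀ i, 2 ≤ k i) : 1 < multiRamsey k := by
  have h : AvoidsCliques (fun _ : Sym2 Unit => (0 : Fin r)) k := .of_card_lt _ fun i => by
    simpa using Nat.lt_of_succ_le (hk i)
  simpa using h.card_lt_multiRamsey

theorem multiRamsey_sub_one_mul_le (k : Fin r → ℕ) (l : Fin s → ℕ) :
    (multiRamsey k - 1) * (multiRamsey l - 1) ≤ multiRamsey (Fin.append k l) - 1 := by
  obtain hk | hk := (multiRamsey k - 1).eq_zero_or_pos
  · simp [hk]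
  obtain hl | hl := (multiRamsey l - 1).eq_zero_or_pos
  · simp [hl]
  obtain ⟨c, hc⟩ :=
    exists_avoidsCliques_of_lt_multiRamsey hk (Nat.sub_lt (multiRamsey_mem k).1 one_pos)
  obtain ⟨d, hd⟩ :=
    exists_avoidsCliques_of_lt_multiRamsey hl (Nat.sub_lt (multiRamsey_mem l).1 one_pos)
  have happend : Fin.append k l ∘ finSumFinEquiv = Sum.elim k l := by
    ext (i | j) <;> simp
  have h : AvoidsCliques (finSumFinEquiv ∘ lexColoring c d) (Fin.append k l) :=
    .equiv_comp _ (happend ▸ hc.lexColoring hd)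
  simpa using Nat.le_sub_one_of_lt h.card_lt_multiRamsey

theorem diagRamsey_sub_one_mul_le (r s k : ℕ) :
    (diagRamsey r k - 1) * (diagRamsey s k - 1) ≤ diagRamsey (r + s) k - 1 := by
  have happend : Fin.append (fun _ : Fin r => k) (fun _ : Fin s => k) = fun _ => k := by
    ext i
    induction i using Fin.addCases <;> simp
  have h := multiRamsey_sub_one_mul_le (fun _ : Fin r => k) (fun _ : Fin s => k)
  rwa [happend] at h

theorem one_lt_diagRamsey {r k : ℕ} (hr : r ≠ 0) (hk : 2 ≤ k) : 1 < diagRamsey r k :=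
  have : NeZero r := ⟨hr⟩
  one_lt_multiRamsey fun _ => hk

end RamseyNumbers

section Fekete

open scoped NNReal

theorem tendsto_div_iSup_of_superadditive {w : ℕ → ℝ}
    (hw : ∀ m n, m ≠ 0 → n ≠ 0 → w m + w n ≤ w (m + n)) :
    Tendsto (fun n : ℕ => ((w n / n : ℝ) : EReal)) atTop
      (𝓝 (⨆ (n : ℕ) (_ : 1 ≤ n), ((w n / n : ℝ) : EReal))) := by
  -- `Subadditive` also constrains index `0`, so the value there is reset to `0`.
  have hsub : Subadditive fun n => if n = 0 then 0 else -w n := by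
    intro m n
    rcases eq_or_ne m 0 with rfl | hm
    · simp
    rcases eq_or_ne n 0 with rfl | hn
    · simp
    simpa [hm, hn, add_comm] using hw m n hm hn
  refine tendsto_order.mpr ⟨fun x hx => ?_, fun x hx => ?_⟩
  · obtain ⟨m, hm, hxm⟩ : ∃ m : ℕ, 1 ≤ m ∧ x < ((w m / m : ℝ) : EReal) := by
      simpa only [lt_iSup_iff, exists_prop] using hx
    have hm0 : m ≠ 0 := Nat.one_le_iff_ne_zero.mp hm
    obtain ⟨y, hxy, hym⟩ := EReal.lt_iff_exists_real_btwn.mp hxm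
    have hym' : (if m = 0 then 0 else -w m) / m < -y := by
      simpa [hm0, neg_div] using EReal.coe_lt_coe_iff.mp hym
    filter_upwards [hsub.eventually_div_lt_of_div_lt hm0 hym', eventually_ne_atTop 0] with n hn hn0
    refine hxy.trans (EReal.coe_lt_coe_iff.mpr ?_)
    simpa [hn0, neg_div] using hn
  · filter_upwards [eventually_ge_atTop 1] with n hn
    exact (le_iSup₂ (f := fun (n : ℕ) (_ : 1 ≤ n) => ((w n / n : ℝ) : EReal)) n hn).trans_lt hx

theorem tendsto_rpow_one_div_iSup_of_supermultiplicative {a : ℕ → ℝ≥0} (ha : ∀ n, n ≠ 0 → a n ≠ 0)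
    (hmul : ∀ m n, m ≠ 0 → n ≠ 0 → a m * a n ≤ a (m + n)) :
    Tendsto (fun n : ℕ => (a n : ℝ≥0∞) ^ (1 / (n : ℝ))) atTop
      (𝓝 (⨆ (n : ℕ) (_ : 1 ≤ n), (a n : ℝ≥0∞) ^ (1 / (n : ℝ)))) := by
  have hexp {n : ℕ} (hn : n ≠ 0) :
      EReal.exp ((Real.log (a n) / n : ℝ) : EReal) = (a n : ℝ≥0∞) ^ (1 / (n : ℝ)) := by
    rw [ENNReal.rpow_eq_exp_mul_log, ENNReal.log_of_nnreal (ha n hn), ← EReal.coe_mul,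
      one_div_mul_eq_div]
  have hlog (m n : ℕ) (hm : m ≠ 0) (hn : n ≠ 0) :
      Real.log (a m) + Real.log (a n) ≤ Real.log (a (m + n)) := by
    have hm' : (a m : ℝ) ≠ 0 := NNReal.coe_ne_zero.mpr (ha m hm)
    have hn' : (a n : ℝ) ≠ 0 := NNReal.coe_ne_zero.mpr (ha n hn)
    rw [← Real.log_mul hm' hn']
    exact Real.log_le_log (by positivity) (mod_cast hmul m n hm hn)
  have hlim := (ENNReal.continuous_exp.tendsto _).comp (tendsto_div_iSup_of_superadditive hlog)
  have hsup : EReal.exp (⨆ (n : ℕ) (_ : 1 ≤ n), ((Real.log (a n) / n : ℝ) : EReal)) =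
      ⨆ (n : ℕ) (_ : 1 ≤ n), (a n : ℝ≥0∞) ^ (1 / (n : ℝ)) := by
    simp only [← EReal.expOrderIso_apply, OrderIso.map_iSup]
    exact biSup_congr fun n hn => hexp (Nat.one_le_iff_ne_zero.mp hn)
  rw [hsup] at hlim
  exact hlim.congr' ((eventually_ne_atTop 0).mono fun n hn => hexp hn)

theorem tendsto_rpow_one_div_atTop_one {C : ℝ≥0} (hC : C ≠ 0) :
    Tendsto (fun n : ℕ => (C : ℝ≥0∞) ^ (1 / (n : ℝ))) atTop (𝓝 1) := by
  have h : Tendsto (fun n : ℕ => C ^ (1 / (n : ℝ))) atTop (𝓝 (C ^ (0 : ℝ))) :=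
    tendsto_const_nhds.nnrpow tendsto_one_div_atTop_nhds_zero_nat (.inl hC)
  simpa [ENNReal.coe_rpow_of_ne_zero hC] using ENNReal.tendsto_coe.mpr h

theorem tendsto_rpow_one_div_of_le_of_le_mul {u v : ℕ → ℝ≥0∞} {L : ℝ≥0∞} {C : ℝ≥0} (hC : C ≠ 0)
    (hu : Tendsto (fun n : ℕ => u n ^ (1 / (n : ℝ))) atTop (𝓝 L)) (huv : ∀ᶠ n in atTop, u n ≤ v n)
    (hvu : ∀ᶠ n in atTop, v n ≤ C * u n) :
    Tendsto (fun n : ℕ => v n ^ (1 / (n : ℝ))) atTop (𝓝 L) := by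
  have hCu : Tendsto (fun n : ℕ => (C : ℝ≥0∞) ^ (1 / (n : ℝ)) * u n ^ (1 / (n : ℝ))) atTop
      (𝓝 L) := by
    simpa using ENNReal.Tendsto.mul (tendsto_rpow_one_div_atTop_one hC) (.inl one_ne_zero) hu
      (.inr ENNReal.one_ne_top)
  refine tendsto_of_tendsto_of_tendsto_of_le_of_le' hu hCu ?_ ?_
  · filter_upwards [huv] with n hn
    gcongr
  · filter_upwards [hvu] with n hn
    rw [← ENNReal.mul_rpow_of_nonneg _ _ (by positivity)]
    gcongr

end Fekete

/-- for every `k ≥ 2` the sequence `r ↦ R_r(k)^{1/r}` converges in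
`[0, ∞]` and its limit equals `⨆ (r ≥ 1), (R_r(k) − 1)^{1/r}`. -/
theorem stmt2 (k : ℕ) (hk : 2 ≤ k) :
    Tendsto (fun r : ℕ => ((diagRamsey r k : ℝ≥0∞)) ^ (1 / (r : ℝ))) atTop
      (𝓝 (⨆ (r : ℕ) (_ : 1 ≤ r), ((diagRamsey r k - 1 : ℕ) : ℝ≥0∞) ^ (1 / (r : ℝ)))) := by
  have hlt {r : ℕ} (hr : r ≠ 0) : 1 < diagRamsey r k := one_lt_diagRamsey hr hk
  have hlim := tendsto_rpow_one_div_iSup_of_supermultiplicative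
    (a := fun r => ((diagRamsey r k - 1 : ℕ) : NNReal))
    (fun r hr => Nat.cast_ne_zero.mpr (Nat.sub_ne_zero_of_lt (hlt hr)))
    (fun r s _ _ => mod_cast diagRamsey_sub_one_mul_le r s k)
  simp only [ENNReal.coe_natCast] at hlim
  refine tendsto_rpow_one_div_of_le_of_le_mul two_ne_zero hlim ?_ ?_
  · exact .of_forall fun r => Nat.cast_le.mpr (Nat.sub_le _ _)
  · filter_upwards [eventually_ne_atTop 0] with r hr
    have hle : diagRamsey r k ≤ 2 * (diagRamsey r k - 1) := by
      have := hlt hr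
      omega
    exact_mod_cast hle
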